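/- If τ : I → K₊ is twice Fréchet differentiable, then the second directional derivative of Ñ = N ∘ τ along a single direction η satisfies D² Ñ(ι; η, η) = (2 P_{τ'}(η)² + P_{τ''}(η²)) Ñ(ι), where P_{τ'}(η) = P_{τ(ι)}(Dτ(ι;η)) and P_{τ''}(η²) = P_{τ(ι)}(D²τ(ι;η,η)). -/

import Mathlib

/-!
The point is that `P` is differentiable in operator norm, although only the derivatives of its
evaluations `P · ξ` are given. On the segment from `x` to `y` the defect
`w t = q t - q 0 - t p t q 0`, with `p t = P_{x + t(y - x)}(y - x)` and `q t = P_{x + t(y - x)}(ξ)`,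
solves the linear equation `w' = p w` with `w 0 = 0`, so it vanishes. At `t = 1` this is the
resolvent identity `P_y - P_x = P_y(y - x) P_x`, whose right-hand side is the required first-order
expansion once `P` is known to be locally bounded. The formula then follows from the product rule
for `D N(ξ) = P(ξ) N` and the chain rule for second derivatives.
-/

open Asymptotics ContinuousLinearMap Filter Set Topology

section ChainRule

variable {𝕜 E F G : Type*} [NontriviallyNormedField 𝕜] [NormedAddCommGroup E] [NormedSpace 𝕜 E]
  [NormedAddCommGroup F] [NormedSpace 𝕜 F] [NormedAddCommGroup G] [NormedSpace 𝕜 G]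

theorem iteratedFDeriv_two_comp_apply {g : F → G} {f : E → F} {x : E}
    (hg : ∀ᶠ y in 𝓝 (f x), DifferentiableAt 𝕜 g y)
    (hg' : DifferentiableAt 𝕜 (fderiv 𝕜 g) (f x))
    (hf : ∀ᶠ y in 𝓝 x, DifferentiableAt 𝕜 f y) (hf' : DifferentiableAt 𝕜 (fderiv 𝕜 f) x)
    (m : Fin 2 → E) :
    iteratedFDeriv 𝕜 2 (g ∘ f) x m =
      iteratedFDeriv 𝕜 2 g (f x) (fun i => fderiv 𝕜 f x (m i)) +
        fderiv 𝕜 g (f x) (iteratedFDeriv 𝕜 2 f x m) := by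
  have hfx : DifferentiableAt 𝕜 f x := hf.self_of_nhds
  have hfderiv : fderiv 𝕜 (g ∘ f) =ᶠ[𝓝 x] fun y => (fderiv 𝕜 g (f y)).comp (fderiv 𝕜 f y) := by
    filter_upwards [hf, hfx.continuousAt.eventually hg] with y hfy hgy
    exact fderiv_comp y hgy hfy
  have hprod := ((hg'.hasFDerivAt.comp x hfx.hasFDerivAt).clm_comp
    hf'.hasFDerivAt).congr_of_eventuallyEq hfderiv
  simp only [iteratedFDeriv_two_apply, hprod.fderiv]
  simp [add_comm]

end ChainRule

section Resolvent

variable {A : Type*} [NormedRing A] [NormedAlgebra ℝ A]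

theorem eq_add_smul_mul_of_hasDerivAt {p q : ℝ → A} {b : ℝ} (hb : 0 ≤ b)
    (hp : ∀ t ∈ Icc 0 b, HasDerivAt p (p t * p t) t)
    (hq : ∀ t ∈ Icc 0 b, HasDerivAt q (p t * q t) t) : q b = q 0 + b • (p b * q 0) := by
  set w : ℝ → A := fun t => q t - q 0 - t • (p t * q 0) with hw
  have hw' : ∀ t ∈ Icc 0 b, HasDerivAt w (p t * w t) t := by
    intro t ht
    refine (((hq t ht).sub_const (q 0)).sub
      ((hasDerivAt_id t).smul ((hp t ht).mul_const (q 0)))).congr_deriv ?_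
    simp only [hw, id_eq, one_smul, mul_sub, mul_smul_comm, mul_assoc]
    abel
  obtain ⟨C, hC⟩ := isCompact_Icc.exists_bound_of_continuousOn
    fun t ht => (hp t ht).continuousAt.continuousWithinAt
  have hwb : w b = 0 := by
    refine eq_zero_of_abs_deriv_le_mul_abs_self_of_eq_zero_right (K := C)
      (fun t ht => (hw' t ht).continuousAt.continuousWithinAt)
      (fun t ht => (hw' t (Ico_subset_Icc_self ht)).hasDerivWithinAt) (by simp [hw])
      (fun t ht => ?_) b (right_mem_Icc.mpr hb)
    exact norm_mul_le_of_le (hC t (Ico_subset_Icc_self ht)) le_rfl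
  simpa only [hw, sub_sub, sub_eq_zero] using hwb

end Resolvent

section MulComp

variable {𝕜 E A : Type*} [NontriviallyNormedField 𝕜] [NormedAddCommGroup E] [NormedSpace 𝕜 E]
  [NonUnitalNormedRing A] [NormedSpace 𝕜 A] [IsScalarTower 𝕜 A A] [SMulCommClass 𝕜 A A]

theorem norm_mul_comp_le (a : A) (T : E →L[𝕜] A) : ‖(mul 𝕜 A a).comp T‖ ≤ ‖a‖ * ‖T‖ :=
  (opNorm_comp_le _ _).trans <| by
    gcongr
    exact opNorm_mul_apply_le 𝕜 A a

end MulComp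

section ResolventFDeriv

variable {𝕜 K A : Type*} [RCLike 𝕜] [NormedAddCommGroup K] [NormedSpace 𝕜 K]
  [NormedRing A] [NormedAlgebra 𝕜 A]

variable (𝕜) in
/-- The differential form `D_x P_x(ξ)(η) = P_x(η) P_x(ξ)`, for `x ∈ s`, of the resolvent identity.
Only the evaluations `x ↦ P_x(ξ)` are required to be differentiable, not `P` in operator norm. -/
def HasResolventFDerivOn (P : K → K →L[𝕜] A) (s : Set K) : Prop :=
  ∀ x ∈ s, ∀ ξ : K, HasFDerivAt (fun y => P y ξ) (((mul 𝕜 A).flip (P x ξ)).comp (P x)) x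

namespace HasResolventFDerivOn

variable {P : K → K →L[𝕜] A} {s t : Set K} {x y : K}

theorem mono (hP : HasResolventFDerivOn 𝕜 P t) (hst : s ⊆ t) : HasResolventFDerivOn 𝕜 P s :=
  fun x hx => hP x (hst hx)

theorem sub_eq_mul_comp [NormedSpace ℝ K] (hP : HasResolventFDerivOn 𝕜 P s) (hs : Convex ℝ s)
    (hx : x ∈ s) (hy : y ∈ s) : P y - P x = (mul 𝕜 A (P y (y - x))).comp (P x) := by
  let : NormedAlgebra ℝ A := NormedAlgebra.restrictScalars ℝ 𝕜 A
  have hderiv : ∀ ζ : K, ∀ r ∈ Icc (0 : ℝ) 1,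
      HasDerivAt (fun r => P (AffineMap.lineMap x y r) ζ)
        (P (AffineMap.lineMap x y r) (y - x) * P (AffineMap.lineMap x y r) ζ) r := fun ζ r hr =>
    ((hP _ (hs.lineMap_mem hx hy hr) ζ).restrictScalars ℝ).comp_hasDerivAt r
      AffineMap.hasDerivAt_lineMap
  ext ξ
  have hξ := eq_add_smul_mul_of_hasDerivAt zero_le_one (hderiv (y - x)) (hderiv ξ)
  simpa [sub_eq_iff_eq_add', sub_mul] using hξ

theorem eventually_sub_eq_mul_comp (hP : HasResolventFDerivOn 𝕜 P s) (hs : s ∈ 𝓝 x) :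
    ∀ᶠ y in 𝓝 x, P y - P x = (mul 𝕜 A (P y (y - x))).comp (P x) := by
  let : NormedSpace ℝ K := NormedSpace.restrictScalars ℝ 𝕜 K
  obtain ⟨r, hr, hball⟩ := Metric.mem_nhds_iff.mp hs
  filter_upwards [Metric.ball_mem_nhds x hr] with y hy
  exact (hP.mono hball).sub_eq_mul_comp (convex_ball x r) (Metric.mem_ball_self hr) hy

theorem continuousAt (hP : HasResolventFDerivOn 𝕜 P s) (hs : s ∈ 𝓝 x) : ContinuousAt P x := by
  have hdist : Tendsto (fun y => ‖P x‖ * ‖y - x‖) (𝓝 x) (𝓝 0) :=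
    Continuous.tendsto' (by fun_prop) _ _ (by simp)
  rw [ContinuousAt, tendsto_iff_norm_sub_tendsto_zero]
  refine squeeze_zero' (g := fun y => 2 * ‖P x‖ * (‖P x‖ * ‖y - x‖))
    (.of_forall fun _ => norm_nonneg _) ?_ (by simpa using hdist.const_mul (2 * ‖P x‖))
  filter_upwards [hP.eventually_sub_eq_mul_comp hs,
    hdist.eventually_le_const (one_half_pos (α := ℝ))] with y hy hsmall
  have hPy : ‖P y‖ ≤ ‖P y - P x‖ + ‖P x‖ := by
    simpa using norm_add_le (P y - P x) (P x)
  have hself : ‖P y - P x‖ ≤ (‖P y - P x‖ + ‖P x‖) * (‖P x‖ * ‖y - x‖) := calc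
    ‖P y - P x‖ = ‖(mul 𝕜 A (P y (y - x))).comp (P x)‖ := by rw [← hy]
    _ ≤ ‖P y (y - x)‖ * ‖P x‖ := norm_mul_comp_le _ _
    _ ≤ ‖P y‖ * ‖y - x‖ * ‖P x‖ := by
      gcongr
      exact le_opNorm _ _
    _ ≤ (‖P y - P x‖ + ‖P x‖) * (‖P x‖ * ‖y - x‖) := by
      rw [mul_assoc, mul_comm ‖y - x‖]
      gcongr
  nlinarith [norm_nonneg (P y - P x)]

theorem hasFDerivAt (hP : HasResolventFDerivOn 𝕜 P s) (hs : s ∈ 𝓝 x) :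
    HasFDerivAt P ((mul 𝕜 A).bilinearComp (P x) (P x)) x := by
  have hsmall : (fun y => ‖P y - P x‖ * ‖y - x‖) =o[𝓝 x] fun y => y - x := by
    have hlim := tendsto_iff_norm_sub_tendsto_zero.mp (hP.continuousAt hs)
    simpa using ((isLittleO_one_iff ℝ).mpr hlim).mul_isBigO (isBigO_refl (fun y => ‖y - x‖) _)
  refine .of_isLittleO (IsBigO.trans_isLittleO (.of_bound ‖P x‖ ?_) hsmall)
  filter_upwards [hP.eventually_sub_eq_mul_comp hs] with y hy
  have hrem : P y - P x - (mul 𝕜 A).bilinearComp (P x) (P x) (y - x) =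
      (mul 𝕜 A ((P y - P x) (y - x))).comp (P x) := by
    nth_rw 1 [hy]
    ext ξ
    simp
  calc ‖P y - P x - (mul 𝕜 A).bilinearComp (P x) (P x) (y - x)‖
      ≤ ‖(P y - P x) (y - x)‖ * ‖P x‖ := hrem ▸ norm_mul_comp_le _ _
    _ ≤ ‖P y - P x‖ * ‖y - x‖ * ‖P x‖ := by
      gcongr
      exact le_opNorm _ _
    _ = ‖P x‖ * ‖‖P y - P x‖ * ‖y - x‖‖ := by
      rw [mul_comm, norm_mul, norm_norm, norm_norm]

end HasResolventFDerivOn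

end ResolventFDeriv

section SecondDerivative

variable {𝕜 H X K : Type*} [RCLike 𝕜] [NormedAddCommGroup H] [NormedSpace 𝕜 H]
  [NormedAddCommGroup X] [NormedSpace 𝕜 X] [NormedAddCommGroup K] [NormedSpace 𝕜 K]
  {N : K → X →L[𝕜] H} {P : K → K →L[𝕜] (H →L[𝕜] H)} {s : Set K} {x : K}

namespace HasResolventFDerivOn

theorem hasFDerivAt_fderiv (hP : HasResolventFDerivOn 𝕜 P s)
    (hN : ∀ y ∈ s, HasFDerivAt N (((compL 𝕜 X H H).flip (N y)).comp (P y)) y) (hs : s ∈ 𝓝 x) :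
    HasFDerivAt (fderiv 𝕜 N)
      ((compL 𝕜 K (H →L[𝕜] H) (X →L[𝕜] H) ((compL 𝕜 X H H).flip (N x))).comp
        ((mul 𝕜 (H →L[𝕜] H)).bilinearComp (P x) (P x) +
          (mul 𝕜 (H →L[𝕜] H)).flip.bilinearComp (P x) (P x))) x := by
  have hfderiv : fderiv 𝕜 N =ᶠ[𝓝 x] fun y => ((compL 𝕜 X H H).flip (N y)).comp (P y) :=
    mem_of_superset hs fun y hy => (hN y hy).fderiv
  have hcomp : HasFDerivAt (fun y => (compL 𝕜 X H H).flip (N y))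
      ((compL 𝕜 X H H).flip.comp (((compL 𝕜 X H H).flip (N x)).comp (P x))) x :=
    HasFDerivAt.comp (g := (compL 𝕜 X H H).flip) x (compL 𝕜 X H H).flip.hasFDerivAt
      (hN x (mem_of_mem_nhds hs))
  refine ((hcomp.clm_comp (hP.hasFDerivAt hs)).congr_of_eventuallyEq hfderiv).congr_fderiv ?_
  ext η ζ v
  simp

theorem iteratedFDeriv_two_eq (hP : HasResolventFDerivOn 𝕜 P s)
    (hN : ∀ y ∈ s, HasFDerivAt N (((compL 𝕜 X H H).flip (N y)).comp (P y)) y) (hs : s ∈ 𝓝 x)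
    (m : Fin 2 → K) :
    iteratedFDeriv 𝕜 2 N x m =
      (P x (m 0) * P x (m 1) + P x (m 1) * P x (m 0)).comp (N x) := by
  rw [iteratedFDeriv_two_apply, (hP.hasFDerivAt_fderiv hN hs).fderiv]
  rfl

end HasResolventFDerivOn

end SecondDerivative

theorem stmt7_general {𝕜 H X K B : Type*} [RCLike 𝕜]
    [NormedAddCommGroup H] [NormedSpace 𝕜 H] [NormedAddCommGroup X] [NormedSpace 𝕜 X]
    [NormedAddCommGroup K] [NormedSpace 𝕜 K] [NormedAddCommGroup B] [NormedSpace 𝕜 B]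
    {N : K → X →L[𝕜] H} {P : K → K →L[𝕜] (H →L[𝕜] H)} {Kplus : Set K}
    {DN : K → K →L[𝕜] (X →L[𝕜] H)} (hDN : ∀ x ∈ Kplus, ∀ ξ : K, DN x ξ = (P x ξ).comp (N x))
    (hNderiv : ∀ x ∈ Kplus, HasFDerivAt N (DN x) x)
    {DP : K → K → K →L[𝕜] (H →L[𝕜] H)}
    (hDP : ∀ x ∈ Kplus, ∀ ξ η : K, DP x ξ η = P x η * P x ξ)
    (hPderiv : ∀ x ∈ Kplus, ∀ ξ : K, HasFDerivAt (fun y => P y ξ) (DP x ξ) x)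
    {τ : B → K} {ι : B} (hKplus : Kplus ∈ 𝓝 (τ ι))
    (hτ : ∀ᶠ s in 𝓝 ι, DifferentiableAt 𝕜 τ s) (hτ' : DifferentiableAt 𝕜 (fderiv 𝕜 τ) ι)
    (m : Fin 2 → B) :
    iteratedFDeriv 𝕜 2 (fun s => N (τ s)) ι m =
      (P (τ ι) (fderiv 𝕜 τ ι (m 0)) * P (τ ι) (fderiv 𝕜 τ ι (m 1)) +
        P (τ ι) (fderiv 𝕜 τ ι (m 1)) * P (τ ι) (fderiv 𝕜 τ ι (m 0)) +
          P (τ ι) (iteratedFDeriv 𝕜 2 τ ι m)).comp (N (τ ι)) := by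
  have hP : HasResolventFDerivOn 𝕜 P Kplus := fun x hx ξ =>
    (hPderiv x hx ξ).congr_fderiv (ContinuousLinearMap.ext (hDP x hx ξ))
  have hN : ∀ x ∈ Kplus, HasFDerivAt N (((compL 𝕜 X H H).flip (N x)).comp (P x)) x := fun x hx =>
    (hNderiv x hx).congr_fderiv (ContinuousLinearMap.ext (hDN x hx))
  have hNdiff : ∀ᶠ x in 𝓝 (τ ι), DifferentiableAt 𝕜 N x :=
    mem_of_superset hKplus fun x hx => (hN x hx).differentiableAt
  calc iteratedFDeriv 𝕜 2 (N ∘ τ) ι m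
      = iteratedFDeriv 𝕜 2 N (τ ι) (fun i => fderiv 𝕜 τ ι (m i)) +
          fderiv 𝕜 N (τ ι) (iteratedFDeriv 𝕜 2 τ ι m) :=
        iteratedFDeriv_two_comp_apply hNdiff
          (hP.hasFDerivAt_fderiv hN hKplus).differentiableAt hτ hτ' m
    _ = _ := by
        rw [hP.iteratedFDeriv_two_eq hN hKplus, (hN _ (mem_of_mem_nhds hKplus)).fderiv]
        exact (add_comp _ _ _).symm

/-- Second-derivative formula (Lemma 2.5):
`D² Ñ(ι; η, η) = (2 P_{τ'}(η)² + P_{τ''}(η²)) Ñ(ι)` for `Ñ = N ∘ τ`. -/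
theorem stmt7
    {H : Type*} [NormedAddCommGroup H] [InnerProductSpace ℂ H] [CompleteSpace H]
    {X : Type*} [NormedAddCommGroup X] [InnerProductSpace ℂ X] [FiniteDimensional ℂ X]
    {K : Type*} [NormedAddCommGroup K] [NormedSpace ℂ K]
    {B : Type*} [NormedAddCommGroup B] [NormedSpace ℂ B]
    (N : K → X →L[ℂ] H) (P : K → K →L[ℂ] (H →L[ℂ] H))
    (Kplus : Set K) (hKplus : IsOpen Kplus)
    -- the structure of the derivatives of N and P (Theorem 2.2 and Lemma 2.1)
    (DN : K → K →L[ℂ] (X →L[ℂ] H))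
    (hDN : ∀ τ ∈ Kplus, ∀ ξ : K, DN τ ξ = (P τ ξ).comp (N τ))
    (hNderiv : ∀ τ ∈ Kplus, HasFDerivAt N (DN τ) τ)
    (DP : K → K → K →L[ℂ] (H →L[ℂ] H))
    (hDP : ∀ τ ∈ Kplus, ∀ ξ η : K, DP τ ξ η = (P τ η) * (P τ ξ))
    (hPderiv : ∀ τ ∈ Kplus, ∀ ξ : K, HasFDerivAt (fun s : K => P s ξ) (DP τ ξ) τ)
    -- a twice continuously differentiable parametrization τ : I → K₊
    (I : Set B) (hI : IsOpen I) (τp : B → K) (hmaps : ∀ s ∈ I, τp s ∈ Kplus)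
    (hτ : ContDiffOn ℂ 2 τp I)
    (ι : B) (hι : ι ∈ I) (η : B) :
    (iteratedFDeriv ℂ 2 (fun s : B => N (τp s)) ι) (fun _ => η) =
      (2 • (P (τp ι) (fderiv ℂ τp ι η) * P (τp ι) (fderiv ℂ τp ι η)) +
        P (τp ι) ((iteratedFDeriv ℂ 2 τp ι) fun _ => η)).comp (N (τp ι)) := by
  have hτι : ContDiffAt ℂ 2 τp ι := hτ.contDiffAt (hI.mem_nhds hι)
  have hτdiff : ∀ᶠ s in 𝓝 ι, DifferentiableAt ℂ τp s :=
    (hτ.differentiableOn two_ne_zero).eventually_differentiableAt (hI.mem_nhds hι)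
  simpa only [two_smul] using stmt7_general hDN hNderiv hDP hPderiv (hKplus.mem_nhds (hmaps ι hι))
    hτdiff ((hτι.fderiv_right (m := 1) le_rfl).differentiableAt one_ne_zero) fun _ => η
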